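/- Let m > 2 be even. There exists a constant c > 0 such that for all x, y ∈ ℝ^m, with s = ⟨x,y⟩ and t = √(|x|²|y|² − s²): (i) |A*_{(m−2)/2}(s,t) + B*_{(m−2)/2}(s,t)| ≤ c (1 + |⟨x,y⟩|)^{(m−2)/2}, and (ii) for every pair j ≠ k, |(x_j y_k − x_k y_j) C*_{(m−2)/2}(s,t)| ≤ c (1 + |⟨x,y⟩|)^{(m−2)/2}. -/

import Mathlib

open scoped BigOperators
open MeasureTheory

noncomputable section

namespace CliffordFourier

/-- The entire function `J̃_a(t) = t^{-a} J_a(t) = Σ_{j≥0} (-1)^j (t/2)^{2j} / (j! Γ(j+a+1) 2^a)`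
(for `t > 0` this is literally `t^{-a} J_a(t)`). -/
def besselJt (a t : ℝ) : ℝ :=
  ∑' j : ℕ, ((-1 : ℝ)^j * (t/2) ^ (2*j)) / (j.factorial * Real.Gamma ((j : ℝ) + a + 1) * (2:ℝ)^a)

/-- `A*_{(m-2)/2}(s,t) = Σ_{ℓ=0}^{⌊m/4-3/4⌋} s^{m/2-2-2ℓ} (1/(2^ℓ ℓ!)) Γ(m/2)/Γ(m/2-2ℓ-1) J̃_{(m-2ℓ-3)/2}(t)`. -/
def Astar (m : ℕ) (s t : ℝ) : ℝ :=
  ∑ l ∈ Finset.range ((m - 3)/4 + 1),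
    s ^ (m/2 - 2 - 2*l) * (1 / ((2:ℝ)^l * (l.factorial : ℝ))) *
      (Real.Gamma ((m:ℝ)/2) / Real.Gamma ((m:ℝ)/2 - 2*l - 1)) *
        besselJt (((m:ℝ) - 2*l - 3)/2) t

/-- `B*_{(m-2)/2}(s,t) = -Σ_{ℓ=0}^{⌊m/4-1/2⌋} s^{m/2-1-2ℓ} (1/(2^ℓ ℓ!)) Γ(m/2)/Γ(m/2-2ℓ) J̃_{(m-2ℓ-3)/2}(t)`. -/
def Bstar (m : ℕ) (s t : ℝ) : ℝ :=
  -∑ l ∈ Finset.range ((m - 2)/4 + 1),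
    s ^ (m/2 - 1 - 2*l) * (1 / ((2:ℝ)^l * (l.factorial : ℝ))) *
      (Real.Gamma ((m:ℝ)/2) / Real.Gamma ((m:ℝ)/2 - 2*l)) *
        besselJt (((m:ℝ) - 2*l - 3)/2) t

/-- `C*_{(m-2)/2}(s,t) = -Σ_{ℓ=0}^{⌊m/4-1/2⌋} s^{m/2-1-2ℓ} (1/(2^ℓ ℓ!)) Γ(m/2)/Γ(m/2-2ℓ) J̃_{(m-2ℓ-1)/2}(t)`. -/
def Cstar (m : ℕ) (s t : ℝ) : ℝ :=
  -∑ l ∈ Finset.range ((m - 2)/4 + 1),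
    s ^ (m/2 - 1 - 2*l) * (1 / ((2:ℝ)^l * (l.factorial : ℝ))) *
      (Real.Gamma ((m:ℝ)/2) / Real.Gamma ((m:ℝ)/2 - 2*l)) *
        besselJt (((m:ℝ) - 2*l - 1)/2) t

/-- The Euclidean inner product `⟨x,y⟩ = Σ_i x_i y_i`. -/
def ip {m : ℕ} (x y : Fin m → ℝ) : ℝ := ∑ i, x i * y i

/-!
The functions `J̃_a` satisfy `J̃_a' = -t J̃_{a+1}` and `t² J̃_{a+2} = 2(a+1) J̃_{a+1} - J̃_a`, so the
energy `J̃_a² + (t J̃_{a+1})² = J̃_a² + (J̃_a')²` of the Bessel equation has derivative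
`-2(2a+1) t J̃_{a+1}²`. For `a ≥ -1/2` it is therefore maximal at `t = 0`, which bounds both `J̃_a`
and `t J̃_{a+1}` uniformly in `t`. Every order occurring in `A*` and `B*` is at least `-1/2`, every
order in `C*` at least `1/2`, and no power of `s` exceeds `(m-2)/2`; the missing factor `t` in front
of `C*` is supplied by Lagrange's identity, which gives `|x_j y_k - x_k y_j| ≤ t`.
-/

open Asymptotics Filter

/-- The `j`-th term of the series defining `besselJt a t`. At the poles of `Γ` Mathlib's conventions
`Γ = 0` and `x / 0 = 0` give it the value `0`, in agreement with the entire function `1/Γ`. -/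
def besselJtTerm (a t : ℝ) (j : ℕ) : ℝ :=
  ((-1 : ℝ) ^ j * (t / 2) ^ (2 * j)) / (j.factorial * Real.Gamma ((j : ℝ) + a + 1) * (2 : ℝ) ^ a)

lemma besselJt_eq_tsum (a t : ℝ) : besselJt a t = ∑' j, besselJtTerm a t j := rfl

lemma abs_besselJtTerm_le_of_abs_le {t u : ℝ} (h : |t| ≤ |u|) (a : ℝ) (j : ℕ) :
    |besselJtTerm a t j| ≤ |besselJtTerm a u j| := by
  simp only [besselJtTerm, abs_div, abs_mul, abs_pow]
  gcongr

lemma inv_Gamma_eq_mul_inv_Gamma_add_one (s : ℝ) :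
    (Real.Gamma s)⁻¹ = s * (Real.Gamma (s + 1))⁻¹ := by
  rcases eq_or_ne s 0 with rfl | hs
  · simp [Real.Gamma_zero]
  · rw [Real.Gamma_add_one hs, mul_inv, mul_inv_cancel_left₀ hs]

lemma mul_besselJtTerm_add_one (a t : ℝ) (j : ℕ) :
    2 * (j + a + 1) * besselJtTerm (a + 1) t j = besselJtTerm a t j := by
  have hGamma := inv_Gamma_eq_mul_inv_Gamma_add_one ((j : ℝ) + a + 1)
  simp only [besselJtTerm, div_eq_mul_inv, mul_inv, ← add_assoc, Real.rpow_add_one two_ne_zero,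
    hGamma]
  ring

lemma mul_besselJtTerm_succ (a t : ℝ) (j : ℕ) :
    2 * (j + 1) * besselJtTerm a t (j + 1) = -t ^ 2 * besselJtTerm (a + 1) t j := by
  have hshift : ((j + 1 : ℕ) : ℝ) + a + 1 = j + (a + 1) + 1 := by push_cast; ring
  simp only [besselJtTerm, hshift, Nat.factorial_succ, Real.rpow_add_one two_ne_zero]
  push_cast
  field_simp
  ring

lemma summable_besselJtTerm (a t : ℝ) : Summable (besselJtTerm a t) := by
  refine summable_of_ratio_norm_eventually_le one_half_lt_one ?_
  filter_upwards [eventually_ge_atTop ⌈-a⌉₊, eventually_ge_atTop ⌈t ^ 2⌉₊] with j hja hjt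
  rw [Nat.ceil_le] at hja hjt
  have hpos : 1 ≤ (j : ℝ) + a + 1 := by linarith
  have hratio : (t / 2) ^ 2 / ((j + 1) * (j + a + 1)) ≤ 1 / 2 := by
    rw [div_le_iff₀ (by positivity)]
    nlinarith
  have hsucc : besselJtTerm a t (j + 1) =
      -((t / 2) ^ 2 / ((j + 1) * (j + a + 1))) * besselJtTerm a t j := by
    have hne : (j : ℝ) + a + 1 ≠ 0 := by positivity
    rw [← mul_right_inj' (by positivity : 2 * ((j : ℝ) + 1) ≠ 0), mul_besselJtTerm_succ,
      ← mul_besselJtTerm_add_one a]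
    field_simp
  rw [hsucc, norm_mul, norm_neg, Real.norm_of_nonneg (by positivity)]
  gcongr

lemma hasDerivAt_besselJtTerm_succ (a t : ℝ) (j : ℕ) :
    HasDerivAt (fun u => besselJtTerm a u (j + 1)) (-t * besselJtTerm (a + 1) t j) t := by
  have hpow := (((hasDerivAt_id t).div_const 2).pow (2 * (j + 1))).const_mul ((-1 : ℝ) ^ (j + 1))
  convert! hpow.div_const _ using 1
  have hshift : ((j + 1 : ℕ) : ℝ) + a + 1 = j + (a + 1) + 1 := by push_cast; ring
  simp only [besselJtTerm, hshift, Nat.factorial_succ, Real.rpow_add_one two_ne_zero, id_eq,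
    show 2 * (j + 1) - 1 = 2 * j + 1 by omega]
  push_cast
  field_simp
  ring

lemma hasDerivAt_besselJt (a t : ℝ) :
    HasDerivAt (besselJt a) (-t * besselJt (a + 1) t) t := by
  have hsplit : besselJt a =
      fun u => besselJtTerm a 0 0 + ∑' j, besselJtTerm a u (j + 1) := by
    funext u
    rw [besselJt_eq_tsum, (summable_besselJtTerm a u).tsum_eq_zero_add]
    simp [besselJtTerm]
  set R := |t| + 1 with hR
  have hRpos : 0 < R := by positivity
  rw [hsplit, besselJt_eq_tsum, ← tsum_mul_left]
  refine (hasDerivAt_tsum_of_isPreconnected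
    (u := fun j => R * |besselJtTerm (a + 1) R j|)
    ((summable_besselJtTerm (a + 1) R).abs.mul_left R) Metric.isOpen_ball
    (convex_ball (0 : ℝ) R).isPreconnected
    (fun j u _ => hasDerivAt_besselJtTerm_succ a u j) (fun j u hu => ?_)
    (Metric.mem_ball_self hRpos)
    ((summable_nat_add_iff 1).2 (summable_besselJtTerm a 0)) ?_).const_add _
  · have hu : |u| ≤ R := by simpa using (Metric.mem_ball.1 hu).le
    rw [norm_mul, norm_neg, Real.norm_eq_abs, Real.norm_eq_abs]
    exact mul_le_mul hu (abs_besselJtTerm_le_of_abs_le (hu.trans (le_abs_self R)) _ _)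
      (abs_nonneg _) hRpos.le
  · simp [hR]

lemma sq_mul_besselJt_add_two (a t : ℝ) :
    t ^ 2 * besselJt (a + 2) t = 2 * (a + 1) * besselJt (a + 1) t - besselJt a t := by
  have hleft := (summable_besselJtTerm (a + 1) t).mul_left (2 * (a + 1))
  have hright := summable_besselJtTerm a t
  have hzero : 2 * (a + 1) * besselJtTerm (a + 1) t 0 - besselJtTerm a t 0 = 0 := by
    rw [← mul_besselJtTerm_add_one a]
    push_cast
    ring
  have hsucc (j : ℕ) : t ^ 2 * besselJtTerm (a + 2) t j =
      2 * (a + 1) * besselJtTerm (a + 1) t (j + 1) - besselJtTerm a t (j + 1) := by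
    have hraise := mul_besselJtTerm_succ (a + 1) t j
    rw [show a + 1 + 1 = a + 2 by ring] at hraise
    rw [← mul_besselJtTerm_add_one a]
    push_cast
    linear_combination hraise
  simp only [besselJt_eq_tsum, ← tsum_mul_left]
  rw [← hleft.tsum_sub hright, (hleft.sub hright).tsum_eq_zero_add, hzero, zero_add]
  exact tsum_congr hsucc

/-- The energy `u² + (u')²` of the solution `u = J̃_a` of `u'' + (2a+1)/t u' + u = 0`, written with
`u' = -t J̃_{a+1}`. -/
def besselEnergy (a t : ℝ) : ℝ := besselJt a t ^ 2 + (t * besselJt (a + 1) t) ^ 2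

lemma hasDerivAt_besselEnergy (a t : ℝ) :
    HasDerivAt (besselEnergy a) (-(2 * (2 * a + 1) * t * besselJt (a + 1) t ^ 2)) t := by
  have hderiv := ((hasDerivAt_besselJt a t).pow 2).add
    (((hasDerivAt_id t).mul (hasDerivAt_besselJt (a + 1) t)).pow 2)
  refine hderiv.congr_deriv ?_
  have hrec := sq_mul_besselJt_add_two a t
  rw [show a + 1 + 1 = a + 2 by ring]
  simp only [id_eq, Pi.mul_apply, Nat.cast_ofNat, Nat.add_one_sub_one, pow_one]
  linear_combination (-2 * t * besselJt (a + 1) t) * hrec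

lemma besselEnergy_neg (a t : ℝ) : besselEnergy a (-t) = besselEnergy a t := by
  simp [besselEnergy, besselJt, neg_div, pow_mul]

lemma besselEnergy_le_sq_besselJt_zero {a : ℝ} (ha : -1 / 2 ≤ a) (t : ℝ) :
    besselEnergy a t ≤ besselJt a 0 ^ 2 := by
  have hanti : AntitoneOn (besselEnergy a) (Set.Ici 0) := by
    refine antitoneOn_of_hasDerivWithinAt_nonpos (convex_Ici 0)
      (fun u _ => (hasDerivAt_besselEnergy a u).continuousAt.continuousWithinAt)
      (fun u _ => (hasDerivAt_besselEnergy a u).hasDerivWithinAt) fun u hu => ?_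
    have hu : 0 ≤ u := interior_subset hu
    have ha : 0 ≤ 2 * a + 1 := by linarith
    exact neg_nonpos.2 (by positivity)
  calc besselEnergy a t = besselEnergy a |t| := by
        rcases abs_choice t with h | h <;> simp only [h, besselEnergy_neg]
    _ ≤ besselEnergy a 0 := hanti Set.self_mem_Ici (abs_nonneg t) (abs_nonneg t)
    _ = besselJt a 0 ^ 2 := by simp [besselEnergy]

lemma abs_besselJt_le {a : ℝ} (ha : -1 / 2 ≤ a) (t : ℝ) : |besselJt a t| ≤ |besselJt a 0| :=
  sq_le_sq.1 ((le_add_of_nonneg_right (sq_nonneg _)).trans (besselEnergy_le_sq_besselJt_zero ha t))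

lemma abs_mul_besselJt_add_one_le {a : ℝ} (ha : -1 / 2 ≤ a) (t : ℝ) :
    |t * besselJt (a + 1) t| ≤ |besselJt a 0| :=
  sq_le_sq.1 ((le_add_of_nonneg_left (sq_nonneg _)).trans (besselEnergy_le_sq_besselJt_zero ha t))

lemma besselJt_isBigO_one {a : ℝ} (ha : -1 / 2 ≤ a) :
    besselJt a =O[⊤] fun _ => (1 : ℝ) :=
  isBigO_top.2 ⟨|besselJt a 0|, fun t => by simpa using abs_besselJt_le ha t⟩

lemma mul_besselJt_isBigO_one {a : ℝ} (ha : 1 / 2 ≤ a) :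
    (fun t => t * besselJt a t) =O[⊤] fun _ => (1 : ℝ) :=
  isBigO_top.2 ⟨|besselJt (a - 1) 0|, fun t => by
    simpa using abs_mul_besselJt_add_one_le (a := a - 1) (by linarith) t⟩

lemma pow_isBigO_one_add_abs_pow {p N : ℕ} (h : p ≤ N) :
    (fun s : ℝ => s ^ p) =O[⊤] fun s => (1 + |s|) ^ N := by
  refine isBigO_of_le _ fun s => ?_
  have hs : 1 ≤ 1 + |s| := le_add_of_nonneg_right (abs_nonneg s)
  rw [norm_pow, norm_pow, Real.norm_of_nonneg (zero_le_one.trans hs), Real.norm_eq_abs]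
  calc |s| ^ p ≤ (1 + |s|) ^ p := by gcongr; linarith
    _ ≤ (1 + |s|) ^ N := pow_le_pow_right₀ hs h

lemma pow_fst_mul_isBigO {p N : ℕ} {g : ℝ → ℝ} (hp : p ≤ N) (hg : g =O[⊤] fun _ => (1 : ℝ)) :
    (fun q : ℝ × ℝ => q.1 ^ p * g q.2) =O[⊤] fun q => (1 + |q.1|) ^ N := by
  have hpow := (pow_isBigO_one_add_abs_pow hp).comp_tendsto
    (tendsto_top (f := Prod.fst) (l := (⊤ : Filter (ℝ × ℝ))))
  have hbdd := hg.comp_tendsto (tendsto_top (f := Prod.snd) (l := (⊤ : Filter (ℝ × ℝ))))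
  simpa only [Function.comp_def, mul_one] using hpow.mul hbdd

-- `Astar m`, `Bstar m` and `Cstar m` are the functions of the paper at `m = 2n` only: for odd `m`
-- the exponents `m / 2 - 2 - 2 * l` and `m / 2 - 1 - 2 * l` of `s` are rounded.
lemma Astar_isBigO {n : ℕ} (hn : 1 ≤ n) :
    (fun q : ℝ × ℝ => Astar (2 * n) q.1 q.2) =O[⊤] fun q => (1 + |q.1|) ^ (n - 1) := by
  simp only [Astar, mul_assoc]
  refine IsBigO.fun_sum fun l hl => ?_
  have hl : 2 * (l : ℝ) + 2 ≤ 2 * n := by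
    exact_mod_cast (by grind : 2 * l + 2 ≤ 2 * n)
  refine pow_fst_mul_isBigO (by omega)
    (((besselJt_isBigO_one ?_).const_mul_left _).const_mul_left _)
  push_cast
  linarith

lemma Bstar_isBigO {n : ℕ} (hn : 1 ≤ n) :
    (fun q : ℝ × ℝ => Bstar (2 * n) q.1 q.2) =O[⊤] fun q => (1 + |q.1|) ^ (n - 1) := by
  simp only [Bstar, mul_assoc]
  refine (IsBigO.fun_sum fun l hl => ?_).neg_left
  have hl : 2 * (l : ℝ) + 2 ≤ 2 * n := by
    exact_mod_cast (by grind : 2 * l + 2 ≤ 2 * n)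
  refine pow_fst_mul_isBigO (by omega)
    (((besselJt_isBigO_one ?_).const_mul_left _).const_mul_left _)
  push_cast
  linarith

lemma mul_Cstar_isBigO {n : ℕ} (hn : 1 ≤ n) :
    (fun q : ℝ × ℝ => q.2 * Cstar (2 * n) q.1 q.2) =O[⊤] fun q => (1 + |q.1|) ^ (n - 1) := by
  simp only [Cstar, mul_neg, Finset.mul_sum, mul_assoc, mul_left_comm (Prod.snd _)]
  refine (IsBigO.fun_sum fun l hl => ?_).neg_left
  have hl : 2 * (l : ℝ) + 2 ≤ 2 * n := by
    exact_mod_cast (by grind : 2 * l + 2 ≤ 2 * n)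
  refine pow_fst_mul_isBigO (by omega)
    (((mul_besselJt_isBigO_one ?_).const_mul_left _).const_mul_left _)
  push_cast
  linarith

lemma sum_sq_minors_eq_two_mul_gram {m : ℕ} (x y : Fin m → ℝ) :
    ∑ j, ∑ k, (x j * y k - x k * y j) ^ 2 = 2 * (ip x x * ip y y - ip x y ^ 2) := by
  have hexpand (j k : Fin m) : (x j * y k - x k * y j) ^ 2 =
      x j * x j * (y k * y k) + y j * y j * (x k * x k) - 2 * (x j * y j * (x k * y k)) := by
    ring
  simp only [hexpand, Finset.sum_sub_distrib, Finset.sum_add_distrib, ← Finset.mul_sum,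
    ← Finset.sum_mul]
  simp only [ip]
  ring

lemma sq_minor_le_gram {m : ℕ} (x y : Fin m → ℝ) {j k : Fin m} (hjk : j ≠ k) :
    (x j * y k - x k * y j) ^ 2 ≤ ip x x * ip y y - ip x y ^ 2 := by
  have hrow (i l : Fin m) : (x i * y l - x l * y i) ^ 2 ≤ ∑ k', (x i * y k' - x k' * y i) ^ 2 :=
    Finset.single_le_sum (f := fun k' => (x i * y k' - x k' * y i) ^ 2)
      (fun _ _ => sq_nonneg _) (Finset.mem_univ l)
  have hpair := Finset.add_le_sum (f := fun i => ∑ k', (x i * y k' - x k' * y i) ^ 2)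
      (fun i _ => Finset.sum_nonneg fun _ _ => sq_nonneg _)
      (Finset.mem_univ j) (Finset.mem_univ k) hjk
  rw [sum_sq_minors_eq_two_mul_gram] at hpair
  linarith [hrow j k, hrow k j, sub_sq_comm (x k * y j) (x j * y k)]

/-- For even `m > 2` the functions in the explicit formula of the Clifford-Fourier kernel
satisfy the bounds `|A* + B*| ≤ c (1 + |⟨x,y⟩|)^{(m-2)/2}` and
`|(x_j y_k - x_k y_j) C*| ≤ c (1 + |⟨x,y⟩|)^{(m-2)/2}`. -/
theorem kernel_component_bounds (m : ℕ) (hme : Even m) (hm : 2 < m) :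
    ∃ c : ℝ, 0 < c ∧ ∀ x y : Fin m → ℝ,
      (|Astar m (ip x y) (Real.sqrt (ip x x * ip y y - ip x y^2))
          + Bstar m (ip x y) (Real.sqrt (ip x x * ip y y - ip x y^2))|
        ≤ c * (1 + |ip x y|) ^ ((m - 2)/2)) ∧
      (∀ j k : Fin m, j ≠ k →
        |(x j * y k - x k * y j) *
            Cstar m (ip x y) (Real.sqrt (ip x x * ip y y - ip x y^2))|
          ≤ c * (1 + |ip x y|) ^ ((m - 2)/2)) := by
  obtain ⟨n, rfl⟩ := hme.two_dvd
  have hn : 1 ≤ n := by omega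
  obtain ⟨c₁, hc₁, hAB⟩ := ((Astar_isBigO hn).add (Bstar_isBigO hn)).exists_pos
  obtain ⟨c₂, hC⟩ := isBigO_top.1 (mul_Cstar_isBigO hn)
  rw [isBigOWith_top] at hAB
  rw [show (2 * n - 2) / 2 = n - 1 by omega]
  refine ⟨max c₁ c₂, lt_max_of_lt_left hc₁, fun x y => ?_⟩
  set s := ip x y
  set t := √(ip x x * ip y y - s ^ 2)
  have hgrowth : ‖(1 + |s|) ^ (n - 1)‖ = (1 + |s|) ^ (n - 1) :=
    Real.norm_of_nonneg (by positivity)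
  refine ⟨?_, fun j k hjk => ?_⟩
  · calc |Astar (2 * n) s t + Bstar (2 * n) s t| ≤ c₁ * (1 + |s|) ^ (n - 1) :=
          hgrowth ▸ hAB (s, t)
      _ ≤ max c₁ c₂ * (1 + |s|) ^ (n - 1) := by gcongr; exact le_max_left _ _
  · calc |(x j * y k - x k * y j) * Cstar (2 * n) s t| ≤ |t * Cstar (2 * n) s t| := by
          rw [abs_mul, abs_mul, abs_of_nonneg (Real.sqrt_nonneg _ : 0 ≤ t)]
          gcongr
          exact Real.abs_le_sqrt (sq_minor_le_gram x y hjk)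
      _ ≤ c₂ * (1 + |s|) ^ (n - 1) := hgrowth ▸ hC (s, t)
      _ ≤ max c₁ c₂ * (1 + |s|) ^ (n - 1) := by gcongr; exact le_max_right _ _

end CliffordFourier
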